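/- Let a ∈ L¹(ℝ₊)^{p×p}, b ∈ L¹(ℝ₊)^{p×q}, c ∈ L¹(ℝ₋)^{q×p}, d ∈ L¹(ℝ₋)^{q×q}. If the twofold Ellis–Gohberg inverse problem for {a,b,c,d} has a solution g ∈ L¹(ℝ₊)^{p×q}, then condition (L1) holds, i.e. a* + a + a*⋆a − c*⋆c = 0, d* + d + d*⋆d − b*⋆b = 0 and b + a*⋆b = c* + c*⋆d, and moreover the operators M₁₁ and M₂₂ are injective (indeed invertible). -/

import Mathlib

/-! The space `L¹(ℝ)` with convolution and a unit adjoined is a commutative star ring, the Wiener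
algebra `WU`. Functions supported in `[0, ∞)` (resp. `(-∞, 0]`), together with the constants, form
subrings `Ap` and `Am`; the involution interchanges them and they share only the constants.

Write `α, β, γ, δ, g` for the matrices over `WU` given by the data. The relations of the inverse
problem say `α + gγ, gδ + β ∈ Am` and `gᴴα + γ, δ + gᴴβ ∈ Ap`. Hence, for instance,
`αᴴα - γᴴγ = (αᴴ + γᴴgᴴ)α - γᴴ(gᴴα + γ) = αᴴ(α + gγ) - (αᴴg + γᴴ)γ`
is both causal and anticausal, so it equals its constant term `1`. In this way `EGAlg.first`,
`EGAlg.second` and `EGAlg.third` give condition (L1). These three identities say that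
`U = [α β; γ δ]` has the left inverse `J Uᴴ J`, with `J = diag(1, -1)`. Since `WU` is commutative,
this is also a right inverse, which gives the transposed identities (`EGAlg.transposed`).

Let `P` and `Q` be the complementary truncations to `[0, ∞)` and `(-∞, 0]`. The relations and the
transposed identities imply that `M₁₁ = PαPαᴴP - PβPβᴴP` and `N = P - PgQgᴴP` are inverse to each
other on the range of `P` (`opM_opN`, `opN_opM`). Interchanging `P` and `Q` gives the same for
`M₂₂`. Extension by zero identifies `L¹` of a half-line with the range of a truncation, and
Wiener–Hopf operators with truncated multiplications (`emb_T`), so `M₁₁` and `M₂₂` are bijective;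
by the open mapping theorem they have bounded inverses. -/

open MeasureTheory Set Matrix
open scoped ComplexConjugate

noncomputable section

abbrev MatF (r s : ℕ) := ℝ → Matrix (Fin r) (Fin s) ℂ

def conv {r s u : ℕ} (f : MatF r s) (h : MatF s u) : MatF r u :=
  fun t => Matrix.of fun i j => ∫ τ : ℝ, (f (t - τ) * h τ) i j

def adjF {r s : ℕ} (f : MatF r s) : MatF s r := fun t => (f (-t))ᴴ

def L1Plus {r s : ℕ} (f : MatF r s) : Prop :=
  (∀ i j, Integrable fun t => f t i j) ∧ ∀ t < (0:ℝ), f t = 0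

def L1Minus {r s : ℕ} (f : MatF r s) : Prop :=
  (∀ i j, Integrable fun t => f t i j) ∧ ∀ t > (0:ℝ), f t = 0

def μP : Measure ℝ := volume.restrict (Ici 0)
def μM : Measure ℝ := volume.restrict (Iic 0)

abbrev L1P (n : ℕ) := Lp (Fin n → ℂ) 1 μP
abbrev L1M (n : ℕ) := Lp (Fin n → ℂ) 1 μM

def IsHP {k m : ℕ} (r : MatF k m) (H : L1M m →L[ℂ] L1P k) : Prop :=
  ∀ f : L1M m, ⇑(H f) =ᵐ[μP] fun t => ∫ s, (r (t - s)).mulVec (f s) ∂μM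

def IsHM {k m : ℕ} (r : MatF k m) (H : L1P m →L[ℂ] L1M k) : Prop :=
  ∀ f : L1P m, ⇑(H f) =ᵐ[μM] fun t => ∫ s, (r (t - s)).mulVec (f s) ∂μP

def IsTP {k m : ℕ} (r₀ : Matrix (Fin k) (Fin m) ℂ) (r : MatF k m)
    (T : L1P m →L[ℂ] L1P k) : Prop :=
  ∀ f : L1P m, ⇑(T f) =ᵐ[μP] fun t => r₀.mulVec (f t) + ∫ s, (r (t - s)).mulVec (f s) ∂μP

def IsTM {k m : ℕ} (r₀ : Matrix (Fin k) (Fin m) ℂ) (r : MatF k m)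
    (T : L1M m →L[ℂ] L1M k) : Prop :=
  ∀ f : L1M m, ⇑(T f) =ᵐ[μM] fun t => r₀.mulVec (f t) + ∫ s, (r (t - s)).mulVec (f s) ∂μM

def blockCLM {X Y Z W : Type*} [NormedAddCommGroup X] [NormedSpace ℂ X]
    [NormedAddCommGroup Y] [NormedSpace ℂ Y] [NormedAddCommGroup Z] [NormedSpace ℂ Z]
    [NormedAddCommGroup W] [NormedSpace ℂ W]
    (A : X →L[ℂ] Z) (B : Y →L[ℂ] Z) (C : X →L[ℂ] W) (D : Y →L[ℂ] W) :
    (X × Y) →L[ℂ] (Z × W) :=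
  (A.comp (ContinuousLinearMap.fst ℂ X Y) + B.comp (ContinuousLinearMap.snd ℂ X Y)).prod
    (C.comp (ContinuousLinearMap.fst ℂ X Y) + D.comp (ContinuousLinearMap.snd ℂ X Y))

def InvertibleCLM {X Y : Type*} [NormedAddCommGroup X] [NormedSpace ℂ X]
    [NormedAddCommGroup Y] [NormedSpace ℂ Y] (T : X →L[ℂ] Y) : Prop :=
  ∃ S : Y →L[ℂ] X, S.comp T = ContinuousLinearMap.id ℂ X ∧ T.comp S = ContinuousLinearMap.id ℂ Y

def AeZeroPos {r s : ℕ} (f : MatF r s) : Prop := ∀ᵐ t : ℝ, 0 < t → f t = 0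
def AeZeroNeg {r s : ℕ} (f : MatF r s) : Prop := ∀ᵐ t : ℝ, t < 0 → f t = 0

def EGSol {p q : ℕ} (a : MatF p p) (b : MatF p q) (c : MatF q p) (d : MatF q q)
    (g : MatF p q) : Prop :=
  AeZeroPos (fun t => a t + conv g c t) ∧
  AeZeroNeg (fun t => adjF g t + conv (adjF g) a t + c t) ∧
  AeZeroNeg (fun t => d t + conv (adjF g) b t) ∧
  AeZeroPos (fun t => g t + conv g d t + b t)


def colF {r s : ℕ} (f : MatF r s) (j : Fin s) : ℝ → Fin r → ℂ := fun t i => f t i j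

/-- Condition (L1): `α*⋄α − γ*⋄γ = e_p`, `δ*⋄δ − β*⋄β = e_q`, `α*⋄β = γ*⋄δ`,
written out in terms of the data `a,b,c,d`. -/
def CondL1 {p q : ℕ} (a : MatF p p) (b : MatF p q) (c : MatF q p) (d : MatF q q) : Prop :=
  (∀ᵐ t ∂(volume : Measure ℝ), adjF a t + a t + conv (adjF a) a t - conv (adjF c) c t = 0) ∧
  (∀ᵐ t ∂(volume : Measure ℝ), adjF d t + d t + conv (adjF d) d t - conv (adjF b) b t = 0) ∧
  (∀ᵐ t ∂(volume : Measure ℝ), b t + conv (adjF a) b t = adjF c t + conv (adjF c) d t)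

/-- The transposed identities (conditions (C4)--(C6) in the `L¹` setting). -/
def CondL1T {p q : ℕ} (a : MatF p p) (b : MatF p q) (c : MatF q p) (d : MatF q q) : Prop :=
  (∀ᵐ t ∂(volume : Measure ℝ), a t + adjF a t + conv a (adjF a) t - conv b (adjF b) t = 0) ∧
  (∀ᵐ t ∂(volume : Measure ℝ), d t + adjF d t + conv d (adjF d) t - conv c (adjF c) t = 0) ∧
  (∀ᵐ t ∂(volume : Measure ℝ), adjF c t + conv a (adjF c) t = b t + conv b (adjF d) t)

/-! ### The algebraic core -/

/-- All entries of the matrix `X` lie in the subring `S`. -/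
def Ent {A m n : Type*} [CommRing A] (S : Subring A) (X : Matrix m n A) : Prop :=
  ∀ i j, X i j ∈ S

namespace Ent
variable {A m n k : Type*} [CommRing A] {S : Subring A}

theorem add {X Y : Matrix m n A} (hX : Ent S X) (hY : Ent S Y) : Ent S (X + Y) :=
  fun i j => S.add_mem (hX i j) (hY i j)

theorem sub {X Y : Matrix m n A} (hX : Ent S X) (hY : Ent S Y) : Ent S (X - Y) :=
  fun i j => S.sub_mem (hX i j) (hY i j)

theorem mul [Fintype n] {X : Matrix m n A} {Y : Matrix n k A} (hX : Ent S X) (hY : Ent S Y) :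
    Ent S (X * Y) :=
  fun i j => S.sum_mem fun l _ => S.mul_mem (hX i l) (hY l j)

theorem one [DecidableEq n] : Ent S (1 : Matrix n n A) := fun i j => by
  rw [Matrix.one_apply]; split_ifs
  exacts [S.one_mem, S.zero_mem]

theorem star [StarRing A] {S' : Subring A} (h : ∀ x ∈ S, star x ∈ S') {X : Matrix m n A}
    (hX : Ent S X) : Ent S' Xᴴ :=
  fun i j => h _ (hX j i)
end Ent

section Algebra
variable {A B m n : Type*} [CommRing A] [StarRing A] [CommRing B] [StarRing B]
  [Fintype m] [Fintype n] [DecidableEq m] [DecidableEq n]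

/-- The twofold Ellis–Gohberg relations in an abstract star ring `A` with causal subring `Ap`,
anticausal subring `Am` (interchanged by the involution, and with only constants in common), and
`ε` reading off the constant term. The matrices `α, β, γ, δ` include the constant terms. -/
structure EGAlg (Ap Am : Subring A) (ε : A →+* B) (α : Matrix m m A) (β : Matrix m n A)
    (γ : Matrix n m A) (δ : Matrix n n A) (g : Matrix m n A) : Prop where
  starp : ∀ x ∈ Ap, star x ∈ Am
  starm : ∀ x ∈ Am, star x ∈ Ap
  inter : ∀ x ∈ Ap, x ∈ Am → ε x = 0 → x = 0
  εstar : ∀ x, ε (star x) = star (ε x)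
  hα : Ent Ap α
  hβ : Ent Ap β
  hγ : Ent Am γ
  hδ : Ent Am δ
  εα : α.map ε = 1
  εβ : β.map ε = 0
  εγ : γ.map ε = 0
  εδ : δ.map ε = 1
  w : Ent Am (α + g * γ)
  u : Ent Ap (gᴴ * α + γ)
  v : Ent Ap (δ + gᴴ * β)
  z : Ent Am (g * δ + β)

namespace EGAlg
variable {Ap Am : Subring A} {ε : A →+* B} {α : Matrix m m A} {β : Matrix m n A}
    {γ : Matrix n m A} {δ : Matrix n n A} {g : Matrix m n A}

theorem us (h : EGAlg Ap Am ε α β γ δ g) : Ent Am (αᴴ * g + γᴴ) := by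
  have := h.u.star h.starp
  simpa using this

theorem vs (h : EGAlg Ap Am ε α β γ δ g) : Ent Am (δᴴ + βᴴ * g) := by
  have := h.v.star h.starp
  simpa using this

theorem ws (h : EGAlg Ap Am ε α β γ δ g) : Ent Ap (αᴴ + γᴴ * gᴴ) := by
  have := h.w.star h.starm
  simpa using this

theorem zs (h : EGAlg Ap Am ε α β γ δ g) : Ent Ap (δᴴ * gᴴ + βᴴ) := by
  have := h.z.star h.starm
  simpa using this

/-- A matrix which is both causal and anticausal and has no constant term vanishes. -/
theorem eq_zero {k l : Type*} (h : EGAlg Ap Am ε α β γ δ g) {X : Matrix k l A} (hp : Ent Ap X)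
    (hm : Ent Am X) (h0 : X.map ε = 0) : X = 0 := by
  ext i j
  exact h.inter _ (hp i j) (hm i j) (by simpa using congrFun (congrFun h0 i) j)

theorem map_star {k l : Type*} (h : EGAlg Ap Am ε α β γ δ g) (X : Matrix k l A) :
    Xᴴ.map ε = (X.map ε)ᴴ := by
  ext i j
  simp [h.εstar]

theorem first (h : EGAlg Ap Am ε α β γ δ g) : αᴴ * α - γᴴ * γ = 1 := by
  rw [← sub_eq_zero]
  refine h.eq_zero ?_ ?_ ?_
  · have e : αᴴ * α - γᴴ * γ - 1 = (αᴴ + γᴴ * gᴴ) * α - γᴴ * (gᴴ * α + γ) - 1 := by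
      simp only [Matrix.mul_add, Matrix.add_mul, Matrix.mul_assoc]; abel
    rw [e]
    exact ((h.ws.mul h.hα).sub ((h.hγ.star h.starm).mul h.u)).sub .one
  · have e : αᴴ * α - γᴴ * γ - 1 = αᴴ * (α + g * γ) - (αᴴ * g + γᴴ) * γ - 1 := by
      simp only [Matrix.mul_add, Matrix.add_mul, Matrix.mul_assoc]; abel
    rw [e]
    exact (((h.hα.star h.starp).mul h.w).sub (h.us.mul h.hγ)).sub .one
  · simp [Matrix.map_sub, Matrix.map_mul, h.map_star, h.εα, h.εγ, Matrix.map_one]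

theorem second (h : EGAlg Ap Am ε α β γ δ g) : δᴴ * δ - βᴴ * β = 1 := by
  rw [← sub_eq_zero]
  refine h.eq_zero ?_ ?_ ?_
  · have e : δᴴ * δ - βᴴ * β - 1 = δᴴ * (δ + gᴴ * β) - (δᴴ * gᴴ + βᴴ) * β - 1 := by
      simp only [Matrix.mul_add, Matrix.add_mul, Matrix.mul_assoc]; abel
    rw [e]
    exact (((h.hδ.star h.starm).mul h.v).sub (h.zs.mul h.hβ)).sub .one
  · have e : δᴴ * δ - βᴴ * β - 1 = (δᴴ + βᴴ * g) * δ - βᴴ * (g * δ + β) - 1 := by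
      simp only [Matrix.mul_add, Matrix.add_mul, Matrix.mul_assoc]; abel
    rw [e]
    exact ((h.vs.mul h.hδ).sub ((h.hβ.star h.starp).mul h.z)).sub .one
  · simp [Matrix.map_sub, Matrix.map_mul, h.map_star, h.εδ, h.εβ, Matrix.map_one]

theorem third (h : EGAlg Ap Am ε α β γ δ g) : αᴴ * β = γᴴ * δ := by
  rw [← sub_eq_zero]
  refine h.eq_zero ?_ ?_ ?_
  · have e : αᴴ * β - γᴴ * δ = (αᴴ + γᴴ * gᴴ) * β - γᴴ * (δ + gᴴ * β) := by
      simp only [Matrix.mul_add, Matrix.add_mul, Matrix.mul_assoc]; abel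
    rw [e]
    exact (h.ws.mul h.hβ).sub ((h.hγ.star h.starm).mul h.v)
  · have e : αᴴ * β - γᴴ * δ = αᴴ * (g * δ + β) - (αᴴ * g + γᴴ) * δ := by
      simp only [Matrix.mul_add, Matrix.add_mul, Matrix.mul_assoc]; abel
    rw [e]
    exact ((h.hα.star h.starp).mul h.z).sub (h.us.mul h.hδ)
  · simp [Matrix.map_sub, Matrix.map_mul, h.map_star, h.εγ, h.εβ]

/-- The transposed identities. With `U = [α β; γ δ]` and `J = diag(1, -1)`, the three relations
above read `(J Uᴴ J) U = 1`; over a commutative ring this left inverse is also a right inverse. -/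
theorem transposed (h : EGAlg Ap Am ε α β γ δ g) :
    (α * αᴴ - β * βᴴ = 1 ∧ δ * δᴴ - γ * γᴴ = 1) ∧ α * γᴴ = β * δᴴ ∧ γ * αᴴ = δ * βᴴ := by
  have h3 : βᴴ * α = δᴴ * γ := by
    have := congrArg conjTranspose h.third
    simpa using this
  have h1 : fromBlocks αᴴ (-γᴴ) (-βᴴ) δᴴ * fromBlocks α β γ δ = 1 := by
    rw [fromBlocks_multiply, ← fromBlocks_one]
    congr 1
    · rw [← h.first, Matrix.neg_mul, sub_eq_add_neg]
    · rw [h.third]; simp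
    · rw [Matrix.neg_mul, h3]; simp
    · rw [← h.second, Matrix.neg_mul]; abel
  have h2 := mul_eq_one_comm.mp h1
  rw [fromBlocks_multiply, ← fromBlocks_one, fromBlocks_inj] at h2
  obtain ⟨e1, e2, e3, e4⟩ := h2
  refine ⟨⟨?_, ?_⟩, ?_, ?_⟩
  · rw [← e1, Matrix.mul_neg, sub_eq_add_neg]
  · rw [← e4, Matrix.mul_neg]; abel
  · rw [Matrix.mul_neg, neg_add_eq_zero] at e2; exact e2
  · rw [Matrix.mul_neg, add_neg_eq_zero] at e3; exact e3

end EGAlg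
end Algebra

section Projections
variable {A m n : Type*} [CommRing A] [Fintype m] [Fintype n] [DecidableEq m]

/-- The additive map `P` applied to each entry of a vector. -/
def vecMap {k : Type*} (P : A →+ A) : (k → A) →+ (k → A) := P.compLeft k

theorem vecMap_mulVec_eq_zero {k l : Type*} [Fintype l] {S : Subring A} {P Q : A →+ A}
    (h : ∀ x ∈ S, ∀ y, P (x * Q y) = 0) {X : Matrix k l A} (hX : Ent S X) (y : l → A) :
    vecMap P (X *ᵥ vecMap Q y) = 0 := by
  ext i
  simp only [vecMap, AddMonoidHom.compLeft_apply, Function.comp, Matrix.mulVec, dotProduct,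
    map_sum, Pi.zero_apply]
  exact Finset.sum_eq_zero fun j _ => h _ (hX i j) _

theorem vecMap_add_vecMap {k : Type*} {P Q : A →+ A} (h : ∀ y, P y + Q y = y) (y : k → A) :
    vecMap P y + vecMap Q y = y := funext fun i => h (y i)

/-- The operator `M₁₁`, on vectors over `A`. -/
def opM (P : A →+ A) (α αs : Matrix m m A) (β : Matrix m n A) (βs : Matrix n m A) (f : m → A) :
    m → A :=
  vecMap P (α *ᵥ vecMap P (αs *ᵥ vecMap P f)) - vecMap P (β *ᵥ vecMap P (βs *ᵥ vecMap P f))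

/-- The operator `I - H₊ H₋` built from the Hankel operators of `g` and of its adjoint `gs`. -/
def opN (P Q : A →+ A) (g : Matrix m n A) (gs : Matrix n m A) (f : m → A) : m → A :=
  vecMap P f - vecMap P (g *ᵥ vecMap Q (gs *ᵥ vecMap P f))

/-- Multiplication by matrices over `Ap` preserves the range of `P`, and multiplication by matrices
over `Am` preserves the range of the complementary map `Q`. -/
structure ProjPair (Ap Am : Subring A) (P Q : A →+ A) : Prop where
  sum : ∀ y, P y + Q y = y
  plus : ∀ x ∈ Ap, ∀ y, Q (x * P y) = 0
  minus : ∀ x ∈ Am, ∀ y, P (x * Q y) = 0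

theorem ProjPair.symm {Ap Am : Subring A} {P Q : A →+ A} (h : ProjPair Ap Am P Q) :
    ProjPair Am Ap Q P :=
  ⟨fun y => by rw [add_comm, h.sum], h.minus, h.plus⟩

theorem ProjPair.P_minus {Ap Am : Subring A} {P Q : A →+ A} (h : ProjPair Ap Am P Q)
    {k l : Type*} [Fintype l] {X : Matrix k l A} (hX : Ent Am X) (y : l → A) :
    vecMap P (X *ᵥ vecMap P y) = vecMap P (X *ᵥ y) := by
  conv_rhs => rw [← vecMap_add_vecMap h.sum y, mulVec_add, map_add,
    vecMap_mulVec_eq_zero h.minus hX, add_zero]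

theorem ProjPair.P_plus {Ap Am : Subring A} {P Q : A →+ A} (h : ProjPair Ap Am P Q)
    {k l : Type*} [Fintype l] {X : Matrix k l A} (hX : Ent Ap X) (y : l → A) :
    vecMap P (X *ᵥ vecMap P y) = X *ᵥ vecMap P y := by
  have := vecMap_add_vecMap h.sum (X *ᵥ vecMap P y)
  rwa [vecMap_mulVec_eq_zero h.plus hX, add_zero] at this

variable {Ap Am : Subring A} {P Q : A →+ A}
  {α αs : Matrix m m A} {β : Matrix m n A} {γ : Matrix n m A} {δ δs : Matrix n n A}
  {βs : Matrix n m A} {γs : Matrix m n A} {g : Matrix m n A} {gs : Matrix n m A}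

theorem ProjPair.P_P (h : ProjPair Ap Am P Q) {k : Type*} [Fintype k] [DecidableEq k] (y : k → A) :
    vecMap P (vecMap P y) = vecMap P y := by
  simpa using h.P_plus (X := (1 : Matrix k k A)) .one y

/-- `M₁₁ (I - H₊ H₋) = I` on the range of `P`. -/
theorem opM_opN (h : ProjPair Ap Am P Q)
    (hαs : Ent Am αs) (hβs : Ent Am βs) (hγs : Ent Ap γs) (hδs : Ent Ap δs)
    (us : Ent Am (αs * g + γs)) (vs : Ent Am (δs + βs * g))
    (ws : Ent Ap (αs + γs * gs)) (zs : Ent Ap (δs * gs + βs))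
    (e1 : α * αs - β * βs = 1) (e2 : α * γs = β * δs) (f : m → A) :
    opM P α αs β βs (opN P Q g gs f) = vecMap P f := by
  set F := vecMap P f with hF
  have hPF : vecMap P F = F := h.P_P f
  set y := gs *ᵥ F with hy
  -- `P αs P g Q = - P γs Q` and `P βs P g Q = - P δs Q`
  have k1 : vecMap P (αs *ᵥ vecMap P (g *ᵥ vecMap Q y)) = - vecMap P (γs *ᵥ vecMap Q y) := by
    rw [h.P_minus hαs, mulVec_mulVec, ← add_eq_zero_iff_eq_neg, ← map_add, ← add_mulVec]
    exact vecMap_mulVec_eq_zero h.minus us y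
  have k2 : vecMap P (βs *ᵥ vecMap P (g *ᵥ vecMap Q y)) = - vecMap P (δs *ᵥ vecMap Q y) := by
    rw [h.P_minus hβs, mulVec_mulVec, ← add_eq_zero_iff_eq_neg, ← map_add, ← add_mulVec,
      add_comm]
    exact vecMap_mulVec_eq_zero h.minus vs y
  have hQ : vecMap Q y = y - vecMap P y := by
    rw [eq_sub_iff_add_eq', vecMap_add_vecMap h.sum]
  have k3 : vecMap P (γs *ᵥ vecMap Q y)
      = (αs + γs * gs) *ᵥ F - vecMap P (αs *ᵥ F) - γs *ᵥ vecMap P y := by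
    rw [hQ, mulVec_sub, map_sub, h.P_plus hγs, hy, mulVec_mulVec]
    have := h.P_plus ws f
    rw [← hF, add_mulVec, map_add] at this
    rw [add_mulVec, ← this]
    abel
  have k4 : vecMap P (δs *ᵥ vecMap Q y)
      = (δs * gs + βs) *ᵥ F - vecMap P (βs *ᵥ F) - δs *ᵥ vecMap P y := by
    rw [hQ, mulVec_sub, map_sub, h.P_plus hδs, hy, mulVec_mulVec]
    have := h.P_plus zs f
    rw [← hF, add_mulVec, map_add] at this
    rw [add_mulVec, ← this]
    abel
  have e3 : α * (αs + γs * gs) - β * (δs * gs + βs) = 1 := by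
    rw [← e1]
    simp only [Matrix.mul_add, ← Matrix.mul_assoc, e2]
    abel
  have k5 : opN P Q g gs f = F - vecMap P (g *ᵥ vecMap Q y) := rfl
  have k6 : vecMap P (opN P Q g gs f) = F - vecMap P (g *ᵥ vecMap Q y) := by
    rw [k5, map_sub, hPF, h.P_P]
  unfold opM
  rw [k6, mulVec_sub, mulVec_sub, map_sub, map_sub, k1, k2]
  have l1 : vecMap P (αs *ᵥ F) - -vecMap P (γs *ᵥ vecMap Q y)
      = (αs + γs * gs) *ᵥ F - γs *ᵥ vecMap P y := by rw [k3]; abel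
  have l2 : vecMap P (βs *ᵥ F) - -vecMap P (δs *ᵥ vecMap Q y)
      = (δs * gs + βs) *ᵥ F - δs *ᵥ vecMap P y := by rw [k4]; abel
  rw [l1, l2, ← map_sub, mulVec_sub, mulVec_sub, mulVec_mulVec, mulVec_mulVec, mulVec_mulVec,
    mulVec_mulVec, e2, sub_sub_sub_cancel_right, ← sub_mulVec, e3, one_mulVec, hPF]

/-- `(I - H₊ H₋) M₁₁ = I` on the range of `P`. -/
theorem opN_opM (h : ProjPair Ap Am P Q)
    (hα : Ent Ap α) (hβ : Ent Ap β) (hγ : Ent Am γ) (hδ : Ent Am δ)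
    (w : Ent Am (α + g * γ)) (u : Ent Ap (gs * α + γ))
    (v : Ent Ap (δ + gs * β)) (z : Ent Am (g * δ + β))
    (e1 : α * αs - β * βs = 1) (e2 : γ * αs = δ * βs) (f : m → A) :
    opN P Q g gs (opM P α αs β βs f) = vecMap P f := by
  set F := vecMap P f with hF
  have hPF : vecMap P F = F := h.P_P f
  set x := αs *ᵥ F with hx
  set y := βs *ᵥ F with hy
  have hM : opM P α αs β βs f = α *ᵥ vecMap P x - β *ᵥ vecMap P y := by
    unfold opM
    rw [h.P_plus hα, h.P_plus hβ]
  have hPM : vecMap P (opM P α αs β βs f) = opM P α αs β βs f := by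
    rw [hM, map_sub, h.P_plus hα, h.P_plus hβ]
  have hxQ : vecMap P x = x - vecMap Q x := by
    rw [eq_sub_iff_add_eq, vecMap_add_vecMap h.sum]
  have hyQ : vecMap P y = y - vecMap Q y := by
    rw [eq_sub_iff_add_eq, vecMap_add_vecMap h.sum]
  -- `Q gs α P = - Q γ P` and `Q gs β P = - Q δ P`
  have k1 : vecMap Q (gs *ᵥ (α *ᵥ vecMap P x)) = - vecMap Q (γ *ᵥ vecMap P x) := by
    rw [mulVec_mulVec, ← add_eq_zero_iff_eq_neg, ← map_add, ← add_mulVec]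
    exact vecMap_mulVec_eq_zero h.plus u x
  have k2 : vecMap Q (gs *ᵥ (β *ᵥ vecMap P y)) = - vecMap Q (δ *ᵥ vecMap P y) := by
    rw [mulVec_mulVec, ← add_eq_zero_iff_eq_neg, ← map_add, ← add_mulVec, add_comm]
    exact vecMap_mulVec_eq_zero h.plus v y
  have k3 : vecMap Q (gs *ᵥ opM P α αs β βs f) = γ *ᵥ vecMap Q x - δ *ᵥ vecMap Q y := by
    rw [hM, mulVec_sub, map_sub, k1, k2, hxQ, hyQ, mulVec_sub, mulVec_sub, map_sub, map_sub,
      h.symm.P_plus hγ, h.symm.P_plus hδ, hx, hy, mulVec_mulVec, mulVec_mulVec, e2]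
    abel
  have k4 : vecMap P (g *ᵥ (γ *ᵥ vecMap Q x)) = - vecMap P (α *ᵥ vecMap Q x) := by
    rw [mulVec_mulVec, ← add_eq_zero_iff_eq_neg, ← map_add, ← add_mulVec, add_comm]
    exact vecMap_mulVec_eq_zero h.minus w x
  have k5 : vecMap P (g *ᵥ (δ *ᵥ vecMap Q y)) = - vecMap P (β *ᵥ vecMap Q y) := by
    rw [mulVec_mulVec, ← add_eq_zero_iff_eq_neg, ← map_add, ← add_mulVec]
    exact vecMap_mulVec_eq_zero h.minus z y
  unfold opN
  rw [hPM, k3, mulVec_sub, map_sub, k4, k5]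
  conv_lhs => rw [← hPM, hM]
  have : vecMap P ((α *ᵥ vecMap P x + α *ᵥ vecMap Q x) - (β *ᵥ vecMap P y + β *ᵥ vecMap Q y))
      = F := by
    rw [← mulVec_add, ← mulVec_add, vecMap_add_vecMap h.sum, vecMap_add_vecMap h.sum, hx, hy,
      mulVec_mulVec, mulVec_mulVec, ← sub_mulVec, e1, one_mulVec, hPF]
  rw [← this]
  simp only [map_sub, map_add]
  abel

end Projections

/-! ### Convolution on the line -/

/-- Scalar convolution, in the variable order used by `conv`. -/
def conv1 (f g : ℝ → ℂ) : ℝ → ℂ := fun t => ∫ τ, f (t - τ) * g τ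

theorem conv1_eq (f g : ℝ → ℂ) :
    conv1 f g = convolution f g (ContinuousLinearMap.mul ℂ ℂ) volume := by
  ext t
  rw [convolution_mul_swap]; rfl

theorem conv1_comm (f g : ℝ → ℂ) : conv1 f g = conv1 g f := by
  ext t
  rw [conv1_eq, convolution_mul, conv1]
  simp only [mul_comm]

theorem integrable_conv1 {f g : ℝ → ℂ} (hf : Integrable f) (hg : Integrable g) :
    Integrable (conv1 f g) := by
  rw [conv1_eq]
  exact hf.integrable_convolution _ hg

theorem ae_conv1_exists {f g : ℝ → ℂ} (hf : Integrable f) (hg : Integrable g) :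
    ∀ᵐ t : ℝ, Integrable fun τ => f (t - τ) * g τ := by
  filter_upwards [hf.ae_convolution_exists (ContinuousLinearMap.mul ℂ ℂ) hg] with t ht
  exact ht.integrable_swap

theorem conv1_congr {f f' g g' : ℝ → ℂ} (hf : f =ᵐ[volume] f') (hg : g =ᵐ[volume] g') :
    conv1 f g = conv1 f' g' := by
  rw [conv1_eq, conv1_eq]
  exact convolution_congr _ hf hg

theorem conv1_assoc {f g k : ℝ → ℂ} (hf : Integrable f) (hg : Integrable g) (hk : Integrable k) :
    conv1 (conv1 f g) k =ᵐ[volume] conv1 f (conv1 g k) := by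
  have h2 := hg.norm.ae_convolution_exists (ContinuousLinearMap.mul ℝ ℝ) hk.norm
  have h3 := hf.norm.ae_convolution_exists (ContinuousLinearMap.mul ℝ ℝ)
    (hg.norm.integrable_convolution (ContinuousLinearMap.mul ℝ ℝ) hk.norm)
  filter_upwards [h3] with t ht
  simp only [conv1_eq]
  exact convolution_assoc (ContinuousLinearMap.mul ℂ ℂ) (ContinuousLinearMap.mul ℂ ℂ)
    (ContinuousLinearMap.mul ℂ ℂ) (ContinuousLinearMap.mul ℂ ℂ)
    (fun x y z => mul_assoc x y z) hf.1 hg.1 hk.1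
    (hf.ae_convolution_exists _ hg) h2 ht

theorem conv1_add {f g k : ℝ → ℂ} (hf : Integrable f) (hg : Integrable g) (hk : Integrable k) :
    conv1 f (g + k) =ᵐ[volume] conv1 f g + conv1 f k := by
  filter_upwards [ae_conv1_exists hf hg, ae_conv1_exists hf hk] with t h1 h2
  simp only [conv1, Pi.add_apply, mul_add]
  exact integral_add h1 h2

theorem conv1_smul (c : ℂ) (f g : ℝ → ℂ) : conv1 f (c • g) = c • conv1 f g := by
  ext t
  simp only [conv1, Pi.smul_apply, smul_eq_mul, ← integral_const_mul]
  congr 1; ext τ; ring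

/-- The involution `f*(t) = conj (f (-t))` on scalar functions. -/
def star1 (f : ℝ → ℂ) : ℝ → ℂ := fun t => conj (f (-t))

theorem integrable_star1 {f : ℝ → ℂ} (hf : Integrable f) : Integrable (star1 f) := by
  have := hf.comp_neg
  exact (Complex.conjLIE.integrable_comp_iff (φ := fun t => f (-t))).2 this

theorem star1_congr {f g : ℝ → ℂ} (h : f =ᵐ[volume] g) : star1 f =ᵐ[volume] star1 g := by
  have := (Measure.measurePreserving_neg (volume : Measure ℝ)).quasiMeasurePreserving.ae_eq_comp h
  filter_upwards [this] with t ht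
  simp only [star1]
  exact congrArg _ ht

theorem star1_conv1 (f g : ℝ → ℂ) : star1 (conv1 f g) = conv1 (star1 f) (star1 g) := by
  ext t
  simp only [star1, conv1]
  rw [← integral_conj, ← integral_neg_eq_self]
  congr 1; ext τ
  rw [map_mul]
  congr 3
  ring

/-! ### The convolution algebra of integrable functions -/

/-- The space of (classes of) integrable functions on `ℝ`, as a type of its own in order to carry
convolution as its multiplication. -/
def WA : Type := Lp ℂ 1 (volume : Measure ℝ)

namespace WA

instance : AddCommGroup WA := inferInstanceAs (AddCommGroup (Lp ℂ 1 (volume : Measure ℝ)))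
instance : Module ℂ WA := inferInstanceAs (Module ℂ (Lp ℂ 1 (volume : Measure ℝ)))

/-- A representative of a class. -/
def rep (w : WA) : ℝ → ℂ := ((show Lp ℂ 1 (volume : Measure ℝ) from w) : ℝ → ℂ)

/-- The class of an integrable function (zero for a function that is not integrable). -/
def cls (f : ℝ → ℂ) : WA := by
  classical exact if h : Integrable f then (h.toL1 f : Lp ℂ 1 (volume : Measure ℝ)) else 0

theorem cls_eq {f : ℝ → ℂ} (h : Integrable f) :
    cls f = (h.toL1 f : Lp ℂ 1 (volume : Measure ℝ)) := by
  exact dif_pos h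

theorem integrable_rep (w : WA) : Integrable (rep w) := L1.integrable_coeFn _

theorem rep_cls {f : ℝ → ℂ} (h : Integrable f) : rep (cls f) =ᵐ[volume] f := by
  rw [cls_eq h]; exact h.coeFn_toL1

theorem cls_rep (w : WA) : cls (rep w) = w := by
  rw [cls_eq (integrable_rep w)]; exact Integrable.toL1_coeFn _ _

theorem cls_inj {f g : ℝ → ℂ} (hf : Integrable f) (hg : Integrable g) :
    cls f = cls g ↔ f =ᵐ[volume] g := by
  rw [cls_eq hf, cls_eq hg]; exact Integrable.toL1_eq_toL1_iff _ _ _ _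

theorem cls_congr {f g : ℝ → ℂ} (hf : Integrable f) (h : f =ᵐ[volume] g) : cls f = cls g :=
  (cls_inj hf (hf.congr h)).2 h

theorem ext_rep {w v : WA} (h : rep w =ᵐ[volume] rep v) : w = v := by
  rw [← cls_rep w, ← cls_rep v]; exact cls_congr (integrable_rep w) h

theorem cls_add {f g : ℝ → ℂ} (hf : Integrable f) (hg : Integrable g) :
    cls (f + g) = cls f + cls g := by
  rw [cls_eq hf, cls_eq hg, cls_eq (hf.add hg)]; exact Integrable.toL1_add _ _ _ _

theorem cls_smul (c : ℂ) {f : ℝ → ℂ} (hf : Integrable f) : cls (c • f) = c • cls f := by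
  rw [cls_eq hf, cls_eq (hf.smul c)]; exact Integrable.toL1_smul f hf c

theorem cls_zero : cls 0 = 0 := by
  rw [cls_eq (integrable_zero _ _ _)]; exact Integrable.toL1_zero _

theorem exists_cls (w : WA) : ∃ f, Integrable f ∧ w = cls f :=
  ⟨rep w, integrable_rep w, (cls_rep w).symm⟩

instance : Mul WA := ⟨fun w v => cls (conv1 (rep w) (rep v))⟩
instance : Star WA := ⟨fun w => cls (star1 (rep w))⟩

theorem cls_mul {f g : ℝ → ℂ} (hf : Integrable f) (hg : Integrable g) :
    cls f * cls g = cls (conv1 f g) := by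
  change cls (conv1 _ _) = _
  rw [conv1_congr (rep_cls hf) (rep_cls hg)]

theorem cls_star {f : ℝ → ℂ} (hf : Integrable f) : star (cls f) = cls (star1 f) :=
  cls_congr (integrable_star1 (integrable_rep _)) (star1_congr (rep_cls hf))

theorem wmul_comm (w v : WA) : w * v = v * w := by
  change cls (conv1 _ _) = cls (conv1 _ _)
  rw [conv1_comm]

theorem wmul_add (w v u : WA) : w * (v + u) = w * v + w * u := by
  obtain ⟨f, hf, rfl⟩ := exists_cls w
  obtain ⟨g, hg, rfl⟩ := exists_cls v
  obtain ⟨k, hk, rfl⟩ := exists_cls u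
  rw [← cls_add hg hk, cls_mul hf (hg.add hk), cls_mul hf hg, cls_mul hf hk,
    ← cls_add (integrable_conv1 hf hg) (integrable_conv1 hf hk)]
  exact cls_congr (integrable_conv1 hf (hg.add hk)) (conv1_add hf hg hk)

theorem wmul_smul (c : ℂ) (w v : WA) : w * (c • v) = c • (w * v) := by
  obtain ⟨f, hf, rfl⟩ := exists_cls w
  obtain ⟨g, hg, rfl⟩ := exists_cls v
  rw [← cls_smul c hg, cls_mul hf (hg.smul c), cls_mul hf hg,
    ← cls_smul c (integrable_conv1 hf hg), conv1_smul]

instance : NonUnitalCommRing WA :=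
  { (inferInstance : AddCommGroup WA), (inferInstance : Mul WA) with
    left_distrib := wmul_add
    right_distrib := fun a b c => by rw [wmul_comm, wmul_add, wmul_comm c, wmul_comm c]
    zero_mul := fun a => by rw [wmul_comm]; simpa using wmul_smul 0 a 0
    mul_zero := fun a => by simpa using wmul_smul 0 a 0
    mul_assoc := fun w v u => by
      obtain ⟨f, hf, rfl⟩ := exists_cls w
      obtain ⟨g, hg, rfl⟩ := exists_cls v
      obtain ⟨k, hk, rfl⟩ := exists_cls u
      rw [cls_mul hf hg, cls_mul hg hk, cls_mul (integrable_conv1 hf hg) hk,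
        cls_mul hf (integrable_conv1 hg hk)]
      exact cls_congr (integrable_conv1 (integrable_conv1 hf hg) hk) (conv1_assoc hf hg hk)
    mul_comm := wmul_comm }

instance : SMulCommClass ℂ WA WA := ⟨fun c w v => (wmul_smul c w v).symm⟩

instance : IsScalarTower ℂ WA WA := ⟨fun c w v => by
  change (c • w) * v = c • (w * v)
  rw [wmul_comm, wmul_smul, wmul_comm]⟩

instance : StarRing WA where
  star_involutive w := by
    obtain ⟨f, hf, rfl⟩ := exists_cls w
    rw [cls_star hf, cls_star (integrable_star1 hf)]
    congr 1; ext t; simp [star1]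
  star_mul w v := by
    obtain ⟨f, hf, rfl⟩ := exists_cls w
    obtain ⟨g, hg, rfl⟩ := exists_cls v
    rw [cls_mul hf hg, cls_star (integrable_conv1 hf hg), cls_star hf, cls_star hg,
      cls_mul (integrable_star1 hg) (integrable_star1 hf), star1_conv1, conv1_comm]
  star_add w v := by
    obtain ⟨f, hf, rfl⟩ := exists_cls w
    obtain ⟨g, hg, rfl⟩ := exists_cls v
    rw [← cls_add hf hg, cls_star hf, cls_star hg, cls_star (hf.add hg),
      ← cls_add (integrable_star1 hf) (integrable_star1 hg)]
    congr 1; ext t; simp [star1]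

instance : StarModule ℂ WA where
  star_smul c w := by
    obtain ⟨f, hf, rfl⟩ := exists_cls w
    rw [← cls_smul c hf, cls_star hf, cls_star (hf.smul c), ← cls_smul _ (integrable_star1 hf)]
    congr 1; ext t; simp [star1]

/-! ### Supports and truncations -/

/-- Integrable functions vanishing almost everywhere outside `s`. -/
def supp (s : Set ℝ) : Submodule ℂ WA where
  carrier := {w | ∀ᵐ t : ℝ, t ∉ s → rep w t = 0}
  zero_mem' := by
    have : rep 0 =ᵐ[volume] 0 := Lp.coeFn_zero _ _ _
    filter_upwards [this] with t ht _ using ht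
  add_mem' := by
    intro w v hw hv
    change ∀ᵐ t : ℝ, t ∉ s → rep (w + v) t = 0
    have : rep (w + v) =ᵐ[volume] rep w + rep v := Lp.coeFn_add _ _
    filter_upwards [this, hw, hv] with t ht h1 h2 hs
    simp [ht, h1 hs, h2 hs]
  smul_mem' := by
    intro c w hw
    change ∀ᵐ t : ℝ, t ∉ s → rep (c • w) t = 0
    have : rep (c • w) =ᵐ[volume] c • rep w := Lp.coeFn_smul _ _
    filter_upwards [this, hw] with t ht h1 hs
    simp [ht, h1 hs]

theorem mem_supp {s : Set ℝ} {w : WA} : w ∈ supp s ↔ ∀ᵐ t : ℝ, t ∉ s → rep w t = 0 := Iff.rfl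

theorem cls_mem_supp {s : Set ℝ} {f : ℝ → ℂ} (hf : Integrable f) :
    cls f ∈ supp s ↔ ∀ᵐ t : ℝ, t ∉ s → f t = 0 := by
  rw [mem_supp]
  constructor <;> intro h <;> filter_upwards [h, rep_cls hf] with t h1 h2 hs
  · rw [← h2, h1 hs]
  · rw [h2, h1 hs]

/-- If `s + s ⊆ s` then the functions supported in `s` are closed under convolution. -/
theorem mul_mem_supp {s : Set ℝ} (hs : ∀ x ∈ s, ∀ y ∈ s, x + y ∈ s) {w v : WA} (hw : w ∈ supp s)
    (hv : v ∈ supp s) : w * v ∈ supp s := by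
  obtain ⟨f, hf, rfl⟩ := exists_cls w
  obtain ⟨g, hg, rfl⟩ := exists_cls v
  rw [cls_mem_supp hf] at hw
  rw [cls_mem_supp hg] at hv
  rw [cls_mul hf hg, cls_mem_supp (integrable_conv1 hf hg)]
  refine .of_forall fun t ht => ?_
  refine integral_eq_zero_of_ae ?_
  have h1 : ∀ᵐ τ : ℝ, t - τ ∉ s → f (t - τ) = 0 :=
    (Measure.measurePreserving_sub_left volume t).quasiMeasurePreserving.ae hw
  filter_upwards [h1, hv] with τ h2 h3
  by_cases h4 : τ ∈ s
  · have : t - τ ∉ s := fun h => ht (by simpa using hs _ h _ h4)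
    simp [h2 this]
  · simp [h3 h4]

theorem star_mem_supp {s s' : Set ℝ} (hs : ∀ x, -x ∈ s → x ∈ s') {w : WA} (hw : w ∈ supp s) :
    star w ∈ supp s' := by
  obtain ⟨f, hf, rfl⟩ := exists_cls w
  rw [cls_mem_supp hf] at hw
  rw [cls_star hf, cls_mem_supp (integrable_star1 hf)]
  have := (Measure.measurePreserving_neg (volume : Measure ℝ)).quasiMeasurePreserving.ae hw
  filter_upwards [this] with t ht hts
  simp [star1, ht (fun h => hts (hs _ h))]

/-- Truncation of an integrable function to `s`. -/
def cut (s : Set ℝ) (w : WA) : WA := cls (s.indicator (rep w))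

theorem cut_cls {s : Set ℝ} (hs : MeasurableSet s) {f : ℝ → ℂ} (hf : Integrable f) :
    cut s (cls f) = cls (s.indicator f) := by
  refine cls_congr ((integrable_rep _).indicator hs) ?_
  filter_upwards [rep_cls hf] with t ht
  simp only [indicator, ht]

theorem cut_add {s : Set ℝ} (hs : MeasurableSet s) (w v : WA) :
    cut s (w + v) = cut s w + cut s v := by
  obtain ⟨f, hf, rfl⟩ := exists_cls w
  obtain ⟨g, hg, rfl⟩ := exists_cls v
  rw [← cls_add hf hg, cut_cls hs hf, cut_cls hs hg, cut_cls hs (hf.add hg), indicator_add',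
    cls_add (hf.indicator hs) (hg.indicator hs)]

theorem cut_mem {s : Set ℝ} (hs : MeasurableSet s) (w : WA) : cut s w ∈ supp s := by
  rw [cut, cls_mem_supp ((integrable_rep _).indicator hs)]
  exact .of_forall fun t ht => indicator_of_notMem ht _

theorem cut_eq_self {s : Set ℝ} {w : WA} (hw : w ∈ supp s) : cut s w = w := by
  conv_rhs => rw [← cls_rep w]
  refine (cls_congr (integrable_rep w) ?_).symm
  filter_upwards [hw] with t ht
  by_cases h : t ∈ s <;> simp [h, ht]

/-- Truncation to `s` kills functions whose support meets `s` in a null set. -/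
theorem cut_eq_zero {s s' : Set ℝ} (hs : MeasurableSet s) (h : ∀ᵐ t : ℝ, t ∈ s → t ∉ s') {w : WA}
    (hw : w ∈ supp s') : cut s w = 0 := by
  rw [← cls_zero]
  refine cls_congr ((integrable_rep w).indicator hs) ?_
  filter_upwards [hw, h] with t ht h'
  by_cases hts : t ∈ s
  · simp [hts, ht (h' hts)]
  · simp [hts]

theorem cut_add_cut {s s' : Set ℝ} (hs : MeasurableSet s) (hs' : MeasurableSet s')
    (h : ∀ᵐ t : ℝ, t ∈ s ↔ t ∉ s') (w : WA) : cut s w + cut s' w = w := by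
  conv_rhs => rw [← cls_rep w]
  rw [cut, cut, ← cls_add ((integrable_rep w).indicator hs) ((integrable_rep w).indicator hs')]
  refine cls_congr (((integrable_rep w).indicator hs).add ((integrable_rep w).indicator hs')) ?_
  filter_upwards [h] with t ht
  by_cases h1 : t ∈ s
  · simp [h1, ht.1 h1]
  · have : t ∈ s' := by simpa using mt ht.2 h1
    simp [h1, this]

end WA

/-! ### The Wiener algebra -/

/-- The Wiener algebra: integrable functions with a convolution unit adjoined. -/
abbrev WU := Unitization ℂ WA

open WA Unitization

/-- Elements of the Wiener algebra whose integrable part is supported in `s`. -/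
def subU (s : Set ℝ) (hs : ∀ x ∈ s, ∀ y ∈ s, x + y ∈ s) : Subring WU where
  carrier := {x | x.snd ∈ supp s}
  zero_mem' := by simp
  one_mem' := by simp
  add_mem' := fun hx hy => by simpa using (supp s).add_mem hx hy
  neg_mem' := fun hx => by simpa using hx
  mul_mem' := fun {x y} hx hy => by
    change (x * y).snd ∈ supp s
    rw [snd_mul]
    exact (supp s).add_mem ((supp s).add_mem ((supp s).smul_mem _ hy) ((supp s).smul_mem _ hx))
      (mul_mem_supp hs hx hy)

theorem mem_subU {s : Set ℝ} {hs : ∀ x ∈ s, ∀ y ∈ s, x + y ∈ s} {x : WU} :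
    x ∈ subU s hs ↔ x.snd ∈ supp s := Iff.rfl

/-- The subring of causal elements. -/
def Ap : Subring WU := subU (Ici 0) fun _ hx _ hy =>
  mem_Ici.2 (add_nonneg (mem_Ici.1 hx) (mem_Ici.1 hy))
/-- The subring of anticausal elements. -/
def Am : Subring WU := subU (Iic 0) fun _ hx _ hy =>
  mem_Iic.2 (add_nonpos (mem_Iic.1 hx) (mem_Iic.1 hy))

theorem mem_Ap {x : WU} : x ∈ Ap ↔ x.snd ∈ supp (Ici 0) := Iff.rfl
theorem mem_Am {x : WU} : x ∈ Am ↔ x.snd ∈ supp (Iic 0) := Iff.rfl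

theorem inr_sum {ι : Type*} (s : Finset ι) (f : ι → WA) :
    (inr (∑ i ∈ s, f i) : WU) = ∑ i ∈ s, inr (f i) :=
  map_sum (inrNonUnitalAlgHom ℂ WA) f s

/-- Truncation of the integrable part to `[0, ∞)`. Constants are kept, so that `projP` and `projQ`
add up to the identity. -/
def projP : WU →+ WU where
  toFun x := inl x.fst + inr (cut (Ici 0) x.snd)
  map_zero' := by simp [cut_eq_self (Submodule.zero_mem _)]
  map_add' x y := by
    rw [snd_add, fst_add, cut_add measurableSet_Ici, inl_add, inr_add]; abel

/-- Truncation of the integrable part to `(-∞, 0]`. Constants are killed. -/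
def projQ : WU →+ WU where
  toFun x := inr (cut (Iic 0) x.snd)
  map_zero' := by simp [cut_eq_self (Submodule.zero_mem _)]
  map_add' x y := by
    rw [snd_add, cut_add measurableSet_Iic, inr_add]

/-- The only common point `0` of the two closed half-lines is negligible. -/
theorem ae_ne_zero : ∀ᵐ t : ℝ, t ≠ 0 := by
  simp [ae_iff]

theorem projPair : ProjPair Ap Am projP projQ where
  sum y := by
    have : ∀ᵐ t : ℝ, t ∈ Ici (0 : ℝ) ↔ t ∉ Iic (0 : ℝ) := by
      filter_upwards [ae_ne_zero] with t ht
      simp [lt_iff_le_and_ne, ht.symm]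
    change inl y.fst + inr (cut (Ici 0) y.snd) + inr (cut (Iic 0) y.snd) = y
    rw [add_assoc, ← inr_add, cut_add_cut measurableSet_Ici measurableSet_Iic this,
      inl_fst_add_inr_snd_eq]
  plus x hx y := by
    have h1 : projP y ∈ Ap := by
      rw [mem_Ap]
      simpa [projP] using cut_mem measurableSet_Ici y.snd
    have h2 : (x * projP y).snd ∈ supp (Ici 0) := mem_Ap.1 (Ap.mul_mem hx h1)
    change inr (cut (Iic 0) (x * projP y).snd) = 0
    rw [cut_eq_zero measurableSet_Iic _ h2, inr_zero]
    filter_upwards [ae_ne_zero] with t ht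
    simp only [mem_Iic, mem_Ici, not_le]
    exact fun h => lt_of_le_of_ne h ht
  minus x hx y := by
    have h1 : projQ y ∈ Am := by
      rw [mem_Am]
      simpa [projQ] using cut_mem measurableSet_Iic y.snd
    have h2 : (x * projQ y).snd ∈ supp (Iic 0) := mem_Am.1 (Am.mul_mem hx h1)
    change inl (x * projQ y).fst + inr (cut (Ici 0) (x * projQ y).snd) = 0
    rw [cut_eq_zero measurableSet_Ici _ h2, inr_zero]
    · simp [projQ]
    filter_upwards [ae_ne_zero] with t ht
    simp only [mem_Iic, mem_Ici, not_le]
    exact fun h => lt_of_le_of_ne h ht.symm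

theorem projP_inr (w : WA) : projP (inr w) = inr (cut (Ici 0) w) := by simp [projP]
theorem projQ_inr (w : WA) : projQ (inr w) = inr (cut (Iic 0) w) := by simp [projQ]

/-! ### Matrix functions as matrices over the Wiener algebra -/

/-- Entrywise integrability. -/
def IntM {k m : ℕ} (r : MatF k m) : Prop := ∀ i j, Integrable fun t => r t i j

/-- The matrix `r₀ e + r` over the Wiener algebra. -/
def sym {k m : ℕ} (r₀ : Matrix (Fin k) (Fin m) ℂ) (r : MatF k m) : Matrix (Fin k) (Fin m) WU :=
  fun i j => inl (r₀ i j) + inr (cls fun t => r t i j)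

theorem cls_sum {ι : Type*} (s : Finset ι) (f : ι → ℝ → ℂ) (hf : ∀ i ∈ s, Integrable (f i)) :
    cls (fun t => ∑ i ∈ s, f i t) = ∑ i ∈ s, cls (f i) := by
  classical
  induction s using Finset.induction_on with
  | empty => exact cls_zero
  | insert a s ha ih =>
    rw [Finset.sum_insert ha, ← ih fun i hi => hf i (Finset.mem_insert_of_mem hi),
      ← cls_add (hf a (Finset.mem_insert_self a s))
        (integrable_finsetSum s fun i hi => hf i (Finset.mem_insert_of_mem hi))]
    congr 1; ext t; simp [Finset.sum_insert ha]

theorem conv_ae {r s u : ℕ} {f : MatF r s} {h : MatF s u} (hf : IntM f) (hh : IntM h) (i : Fin r)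
    (j : Fin u) : (fun t => conv f h t i j)
      =ᵐ[volume] fun t => ∑ l, conv1 (fun t => f t i l) (fun t => h t l j) t := by
  have : ∀ᵐ t : ℝ, ∀ l, Integrable fun τ => f (t - τ) i l * h τ l j :=
    ae_all_iff.2 fun l => ae_conv1_exists (f := fun t => f t i l) (g := fun t => h t l j)
      (hf i l) (hh l j)
  filter_upwards [this] with t ht
  simp only [conv, Matrix.of_apply, Matrix.mul_apply, conv1]
  exact integral_finsetSum _ fun l _ => ht l

theorem IntM.conv {r s u : ℕ} {f : MatF r s} {h : MatF s u} (hf : IntM f) (hh : IntM h) :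
    IntM (_root_.conv f h) := by
  intro i j
  have e0 : ∀ l ∈ Finset.univ, Integrable (conv1 (fun t => f t i l) (fun t => h t l j)) := 
    fun l _ => integrable_conv1 (hf i l) (hh l j)
  have e : Integrable fun t => ∑ l, conv1 (fun t => f t i l) (fun t => h t l j) t :=
    integrable_finsetSum Finset.univ e0
  exact e.congr (conv_ae hf hh i j).symm

theorem IntM.adjF {r s : ℕ} {f : MatF r s} (hf : IntM f) : IntM (_root_.adjF f) :=
  fun i j => integrable_star1 (hf j i)

theorem IntM.add {r s : ℕ} {f g : MatF r s} (hf : IntM f) (hg : IntM g) :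
    IntM (f + g) := fun i j => (hf i j).add (hg i j)

theorem IntM.sub {r s : ℕ} {f g : MatF r s} (hf : IntM f) (hg : IntM g) :
    IntM (f - g) := fun i j => (hf i j).sub (hg i j)

theorem cls_conv {r s u : ℕ} {f : MatF r s} {h : MatF s u} (hf : IntM f) (hh : IntM h) (i : Fin r)
    (j : Fin u) : cls (fun t => conv f h t i j)
      = ∑ l, cls (fun t => f t i l) * cls (fun t => h t l j) := by
  rw [cls_congr (hf.conv hh i j) (conv_ae hf hh i j),
    cls_sum _ _ fun l _ => integrable_conv1 (hf i l) (hh l j)]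
  exact Finset.sum_congr rfl fun l _ => (cls_mul (hf i l) (hh l j)).symm

theorem sym_add {k m : ℕ} (r₀ k₀ : Matrix (Fin k) (Fin m) ℂ) {r h : MatF k m} (hr : IntM r)
    (hh : IntM h) : sym r₀ r + sym k₀ h = sym (r₀ + k₀) (r + h) := by
  ext1 i j
  have : cls (fun t => (r + h) t i j) = cls (fun t => r t i j) + cls (fun t => h t i j) :=
    cls_add (hr i j) (hh i j)
  simp only [sym, Matrix.add_apply, this, inl_add, inr_add]
  abel

theorem sym_sub {k m : ℕ} (r₀ k₀ : Matrix (Fin k) (Fin m) ℂ) {r h : MatF k m} (hr : IntM r)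
    (hh : IntM h) : sym r₀ r - sym k₀ h = sym (r₀ - k₀) (r - h) := by
  rw [sub_eq_iff_eq_add, sym_add _ _ (hr.sub hh) hh, sub_add_cancel, sub_add_cancel]

theorem sym_star {k m : ℕ} (r₀ : Matrix (Fin k) (Fin m) ℂ) {r : MatF k m} (hr : IntM r) :
    (sym r₀ r)ᴴ = sym r₀ᴴ (adjF r) := by
  ext1 i j
  have : star (cls fun t => r t j i) = cls (fun t => adjF r t i j) := cls_star (hr j i)
  simp only [sym, conjTranspose_apply, star_add, ← inl_star, ← inr_star, this]

theorem sym_zero_mul {k m l : ℕ} {r : MatF k m} {h : MatF m l} (hr : IntM r) (hh : IntM h) :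
    sym 0 r * sym 0 h = sym 0 (conv r h) := by
  ext1 i j
  simp only [sym, Matrix.mul_apply, cls_conv hr hh, Matrix.zero_apply, inl_zero, zero_add,
    ← inr_mul]
  exact (inr_sum _ _).symm

theorem sym_one_eq {k : ℕ} (r : MatF k k) : sym 1 r = 1 + sym 0 r := by
  ext1 i j
  simp only [sym, Matrix.add_apply, Matrix.zero_apply, inl_zero, zero_add, Matrix.one_apply]
  split_ifs <;> simp

theorem sym_map {k m : ℕ} (r₀ : Matrix (Fin k) (Fin m) ℂ) (r : MatF k m) :
    (sym r₀ r).map (fstHom ℂ WA : WU →+* ℂ) = r₀ := by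
  ext1 i j
  simp [sym]

theorem sym_ent {k m : ℕ} (r₀ : Matrix (Fin k) (Fin m) ℂ) {r : MatF k m} (hr : IntM r) {s : Set ℝ}
    (hs : ∀ x ∈ s, ∀ y ∈ s, x + y ∈ s) (h : ∀ᵐ t : ℝ, t ∉ s → r t = 0) :
    Ent (subU s hs) (sym r₀ r) := by
  intro i j
  rw [mem_subU]
  simp only [sym, snd_add, snd_inl, snd_inr, zero_add]
  rw [cls_mem_supp (hr i j)]
  filter_upwards [h] with t ht hts
  rw [ht hts]; rfl

theorem sym_inj {k m : ℕ} {r₀ : Matrix (Fin k) (Fin m) ℂ} {r h : MatF k m} (hr : IntM r)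
    (hh : IntM h) (e : sym r₀ r = sym r₀ h) : ∀ᵐ t : ℝ, r t = h t := by
  have : ∀ᵐ t : ℝ, ∀ i j, r t i j = h t i j := by
    refine ae_all_iff.2 fun i => ae_all_iff.2 fun j => ?_
    have e1 := congrArg (fun x : WU => x.snd) (congrFun (congrFun e i) j)
    simp only [sym, snd_add, snd_inl, snd_inr, zero_add] at e1
    exact (cls_inj (hr i j) (hh i j)).1 e1
  filter_upwards [this] with t ht
  ext i j; exact ht i j

/-! ### Vector functions and Wiener–Hopf operators -/

section Transfer
variable {s : Set ℝ} (hs : MeasurableSet s) {μ : Measure ℝ} (hμ : μ = volume.restrict s)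

theorem ae_iff_of (hs : MeasurableSet s) (hμ : μ = volume.restrict s) {p : ℝ → Prop} :
    (∀ᵐ t ∂μ, p t) ↔ ∀ᵐ t : ℝ, t ∈ s → p t := by
  subst hμ; exact ae_restrict_iff' hs

/-- Extension by zero, from integrable vector functions on `s` to vectors over the Wiener algebra. -/
def emb (s : Set ℝ) {μ : Measure ℝ} {n : ℕ} (f : Lp (Fin n → ℂ) 1 μ) : Fin n → WU :=
  fun i => inr (cls (s.indicator fun t => f t i))

theorem integrable_ext (hs : MeasurableSet s) (hμ : μ = volume.restrict s) {n : ℕ}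
    (f : Lp (Fin n → ℂ) 1 μ) (i : Fin n) : Integrable (s.indicator fun t => f t i) := by
  subst hμ
  rw [integrable_indicator_iff hs]
  exact (L1.integrable_coeFn f).eval i

theorem emb_sub (hs : MeasurableSet s) (hμ : μ = volume.restrict s) {n : ℕ}
    (f g : Lp (Fin n → ℂ) 1 μ) : emb s (f - g) = emb s f - emb s g := by
  ext1 i
  have : cls (s.indicator fun t => (f - g) t i) + cls (s.indicator fun t => g t i)
      = cls (s.indicator fun t => f t i) := by
    rw [← cls_add (integrable_ext hs hμ _ i) (integrable_ext hs hμ _ i)]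
    refine cls_congr ((integrable_ext hs hμ _ i).add (integrable_ext hs hμ _ i)) ?_
    have h := Lp.coeFn_sub f g
    rw [Filter.EventuallyEq, ae_iff_of hs hμ] at h
    filter_upwards [h] with t ht
    by_cases hts : t ∈ s
    · simp only [indicator_of_mem hts, ht hts, Pi.add_apply, Pi.sub_apply, sub_add_cancel]
    · simp [hts]
  simp only [emb, Pi.sub_apply]
  rw [eq_sub_iff_add_eq, ← inr_add, this]

theorem emb_injective (hs : MeasurableSet s) (hμ : μ = volume.restrict s) {n : ℕ} :
    Function.Injective (emb s : Lp (Fin n → ℂ) 1 μ → Fin n → WU) := by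
  intro f g h
  have : ∀ᵐ t : ℝ, ∀ i, s.indicator (fun t => f t i) t = s.indicator (fun t => g t i) t := by
    refine ae_all_iff.2 fun i => ?_
    exact (cls_inj (integrable_ext hs hμ _ i) (integrable_ext hs hμ _ i)).1
      (inr_injective (congrFun h i))
  refine Lp.ext ?_
  rw [Filter.EventuallyEq, ae_iff_of hs hμ]
  filter_upwards [this] with t ht hts
  ext i
  simpa [hts] using ht i

/-- Every vector of functions supported in `s` is an extension by zero. -/
theorem exists_emb (hs : MeasurableSet s) (hμ : μ = volume.restrict s) {n : ℕ} (w : Fin n → WA)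
    (hw : ∀ i, w i ∈ supp s) :
    ∃ f : Lp (Fin n → ℂ) 1 μ, emb s f = fun i => inr (w i) := by
  have hi : Integrable (fun t i => rep (w i) t) μ := by
    refine Integrable.of_eval fun i => ?_
    rw [hμ]
    exact (integrable_rep (w i)).restrict
  refine ⟨hi.toL1, ?_⟩
  ext1 i
  rw [← cls_rep (w i)]
  refine congrArg inr (cls_congr (integrable_ext hs hμ _ i) ?_)
  have h := hi.coeFn_toL1
  rw [Filter.EventuallyEq, ae_iff_of hs hμ] at h
  filter_upwards [h, hw i] with t ht h2
  by_cases hts : t ∈ s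
  · simp only [indicator_of_mem hts, ht hts]
  · simp [hts, h2 hts]

theorem emb_fst {n : ℕ} (f : Lp (Fin n → ℂ) 1 μ) (i : Fin n) : (emb s f i).fst = 0 := by
  simp [emb]

theorem mulVec_fst {k n : ℕ} (X : Matrix (Fin k) (Fin n) WU) {v : Fin n → WU}
    (hv : ∀ i, (v i).fst = 0) (i : Fin k) : ((X *ᵥ v) i).fst = 0 := by
  change fstHom ℂ WA (∑ j, X i j * v j) = 0
  rw [map_sum]
  exact Finset.sum_eq_zero fun j _ => by simp [hv]

theorem eq_inr_of_fst {x : WU} (h : x.fst = 0) : x = inr x.snd := by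
  ext <;> simp [h]

theorem vecMap_emb (hs : MeasurableSet s) (hμ : μ = volume.restrict s) {P : WU →+ WU}
    (hP : ∀ w : WA, P (inr w) = inr (cut s w)) {n : ℕ} (f : Lp (Fin n → ℂ) 1 μ) :
    vecMap P (emb s f) = emb s f := by
  ext1 i
  change P (inr _) = inr _
  rw [hP, cut_eq_self]
  rw [cls_mem_supp (integrable_ext hs hμ f i)]
  exact .of_forall fun t ht => indicator_of_notMem ht _

/-- A Wiener–Hopf operator is multiplication by its symbol followed by truncation. -/
theorem emb_T (hs : MeasurableSet s) (hμ : μ = volume.restrict s) {P : WU →+ WU}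
    (hP : ∀ w : WA, P (inr w) = inr (cut s w)) {k m : ℕ}
    {r₀ : Matrix (Fin k) (Fin m) ℂ} {r : MatF k m} (hr : IntM r)
    {f : Lp (Fin m → ℂ) 1 μ} {h : Lp (Fin k → ℂ) 1 μ}
    (e : ⇑h =ᵐ[μ] fun t => r₀.mulVec (f t) + ∫ u, (r (t - u)).mulVec (f u) ∂μ) :
    emb s h = vecMap P (sym r₀ r *ᵥ emb s f) := by
  ext1 i
  set F : Fin m → ℝ → ℂ := fun j => s.indicator fun t => f t j with hF
  have hFi : ∀ j, Integrable (F j) := integrable_ext hs hμ f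
  have hGi : ∀ j ∈ Finset.univ,
      Integrable (r₀ i j • F j + conv1 (fun t => r t i j) (F j)) :=
    fun j _ => ((hFi j).smul _).add (integrable_conv1 (hr i j) (hFi j))
  have h1 : (sym r₀ r *ᵥ emb s f) i
      = inr (cls fun t => ∑ j, (r₀ i j • F j + conv1 (fun t => r t i j) (F j)) t) := by
    rw [cls_sum _ _ hGi, inr_sum]
    change ∑ j, sym r₀ r i j * emb s f j = _
    refine Finset.sum_congr rfl fun j _ => ?_
    rw [cls_add ((hFi j).smul (r₀ i j)) (integrable_conv1 (hr i j) (hFi j)), cls_smul _ (hFi j),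
      ← cls_mul (hr i j) (hFi j)]
    change (inl _ + inr _) * inr (cls (F j)) = inr _
    rw [add_mul, inl_mul_inr, inr_add, inr_mul]
  change inr _ = P ((sym r₀ r *ᵥ emb s f) i)
  rw [h1, hP, cut_cls hs (integrable_finsetSum _ hGi)]
  refine congrArg inr (cls_congr (f := s.indicator fun t => h t i) (integrable_ext hs hμ h i) ?_)
  rw [Filter.EventuallyEq, ae_iff_of hs hμ] at e
  have h2 : ∀ᵐ t : ℝ, ∀ i j, Integrable fun τ => r (t - τ) i j * F j τ :=
    ae_all_iff.2 fun i => ae_all_iff.2 fun j => 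
      ae_conv1_exists (f := fun t => r t i j) (g := F j) (hr i j) (hFi j)
  filter_upwards [e, h2] with t ht h3
  by_cases hts : t ∈ s
  · simp only [indicator_of_mem hts, ht hts, Pi.add_apply, Pi.smul_apply, Finset.sum_add_distrib]
    have hFe : ∀ l j, (fun τ => r (t - τ) l j * F j τ)
        = s.indicator fun τ => r (t - τ) l j * f τ j := by
      intro l j; ext τ
      by_cases h : τ ∈ s <;> simp [hF, h]
    have h4 : ∀ l j, Integrable (fun τ => r (t - τ) l j * f τ j) μ := by
      intro l j
      have h5 := h3 l j
      rw [hFe, integrable_indicator_iff hs, IntegrableOn, ← hμ] at h5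
      exact h5
    have h6 : ∀ l, Integrable (fun u => (r (t - u) *ᵥ f u) l) μ :=
      fun l => integrable_finsetSum Finset.univ fun j _ => h4 l j
    rw [eval_integral h6]
    congr 1
    · simp [Matrix.mulVec, dotProduct, hF, hts]
    · simp only [Matrix.mulVec, dotProduct]
      rw [integral_finsetSum _ fun j _ => h4 i j]
      refine Finset.sum_congr rfl fun j _ => ?_
      rw [conv1, hFe, integral_indicator hs, ← hμ]
  · simp [hts]

/-- Transfer of the two algebraic inversion formulas to the operator on `L¹` of a half-line. -/
theorem bijective_of_op {s' : Set ℝ} (hs : MeasurableSet s) (hμ : μ = volume.restrict s)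
    {P Q : WU →+ WU}
    (hP : ∀ w : WA, P (inr w) = inr (cut s w)) (hQ : ∀ w : WA, Q (inr w) = inr (cut s' w))
    {k m : ℕ} {T₁ T₂ : Lp (Fin k → ℂ) 1 μ →L[ℂ] Lp (Fin k → ℂ) 1 μ}
    {T₃ : Lp (Fin m → ℂ) 1 μ →L[ℂ] Lp (Fin k → ℂ) 1 μ}
    {T₄ : Lp (Fin k → ℂ) 1 μ →L[ℂ] Lp (Fin m → ℂ) 1 μ}
    {α αs : Matrix (Fin k) (Fin k) WU} {β : Matrix (Fin k) (Fin m) WU}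
    {βs : Matrix (Fin m) (Fin k) WU} {g : Matrix (Fin k) (Fin m) WU}
    {gs : Matrix (Fin m) (Fin k) WU}
    (h₁ : ∀ f, emb s (T₁ f) = vecMap P (α *ᵥ emb s f))
    (h₂ : ∀ f, emb s (T₂ f) = vecMap P (αs *ᵥ emb s f))
    (h₃ : ∀ f, emb s (T₃ f) = vecMap P (β *ᵥ emb s f))
    (h₄ : ∀ f, emb s (T₄ f) = vecMap P (βs *ᵥ emb s f))
    (hMN : ∀ f, opM P α αs β βs (opN P Q g gs f) = vecMap P f)
    (hNM : ∀ f, opN P Q g gs (opM P α αs β βs f) = vecMap P f) :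
    Function.Bijective (T₁.comp T₂ - T₃.comp T₄) := by
  have hM : ∀ f, emb s ((T₁.comp T₂ - T₃.comp T₄) f) = opM P α αs β βs (emb s f) := by
    intro f
    simp only [_root_.sub_apply, ContinuousLinearMap.comp_apply]
    rw [emb_sub hs hμ, h₁, h₃, h₂, h₄, opM, vecMap_emb hs hμ hP]
  constructor
  · intro f f' hff
    apply emb_injective hs hμ
    rw [← vecMap_emb hs hμ hP f, ← vecMap_emb hs hμ hP f', ← hNM, ← hNM, ← hM, ← hM, hff]
  · intro y
    -- `opN` maps classes of functions supported in `s` to such classes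
    set v := g *ᵥ vecMap Q (gs *ᵥ emb s y) with hv
    have hv0 : ∀ i, (v i).fst = 0 := by
      refine mulVec_fst _ fun i => ?_
      change (Q ((gs *ᵥ emb s y) i)).fst = 0
      rw [eq_inr_of_fst (mulVec_fst gs (fun i => emb_fst y i) i), hQ, fst_inr]
    obtain ⟨f, hf⟩ := exists_emb hs hμ (fun i => cut s (v i).snd) fun i => cut_mem hs _
    have hf' : emb s f = vecMap P v := by
      rw [hf]; ext1 i
      change _ = P (v i)
      rw [eq_inr_of_fst (hv0 i), hP, snd_inr]
    refine ⟨y - f, emb_injective hs hμ ?_⟩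
    rw [hM, ← vecMap_emb hs hμ hP y, ← hMN, emb_sub hs hμ, hf', opN, vecMap_emb hs hμ hP]

end Transfer

theorem invertible_of_bijective {X : Type*} [NormedAddCommGroup X] [NormedSpace ℂ X]
    [CompleteSpace X] {T : X →L[ℂ] X} (h : Function.Bijective T) : InvertibleCLM T := by
  let e := ContinuousLinearEquiv.ofBijective T (LinearMap.ker_eq_bot.2 h.1)
    (LinearMap.range_eq_top.2 h.2)
  refine ⟨e.symm, ?_, ?_⟩
  · ext1 x; exact e.symm_apply_apply x
  · ext1 x; exact e.apply_symm_apply x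

/-- The inverse problem, read in the Wiener algebra. -/
theorem EGSol.toAlg {p q : ℕ} {a : MatF p p} {b : MatF p q} {c : MatF q p} {d : MatF q q}
    {g : MatF p q} (ha : L1Plus a) (hb : L1Plus b) (hc : L1Minus c) (hd : L1Minus d)
    (hg : L1Plus g) (h : EGSol a b c d g) :
    EGAlg Ap Am (fstHom ℂ WA : WU →+* ℂ) (sym 1 a) (sym 0 b) (sym 0 c) (sym 1 d) (sym 0 g) := by
  have ia : IntM a := ha.1
  have ib : IntM b := hb.1
  have ic : IntM c := hc.1
  have idd : IntM d := hd.1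
  have ig : IntM g := hg.1
  obtain ⟨h1, h2, h3, h4⟩ := h
  have hgs : (sym 0 g)ᴴ = sym 0 (adjF g) := by rw [sym_star _ ig, conjTranspose_zero]
  constructor
  · intro x hx
    rw [mem_Am, snd_star]
    exact star_mem_supp (fun y hy => by simpa using hy) hx
  · intro x hx
    rw [mem_Ap, snd_star]
    exact star_mem_supp (fun y hy => by simpa using hy) hx
  · intro x hp hm h0
    have h5 : x.snd = 0 := by
      rw [← cut_eq_self (mem_Ap.1 hp)]
      refine cut_eq_zero measurableSet_Ici ?_ (mem_Am.1 hm)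
      filter_upwards [ae_ne_zero] with t ht
      simp only [mem_Iic, mem_Ici, not_le]
      exact fun h => lt_of_le_of_ne h ht.symm
    ext
    · simpa using h0
    · simpa using h5
  · intro x; simp
  · exact sym_ent _ ia _ (.of_forall fun t ht => ha.2 t (by simpa using ht))
  · exact sym_ent _ ib _ (.of_forall fun t ht => hb.2 t (by simpa using ht))
  · exact sym_ent _ ic _ (.of_forall fun t ht => hc.2 t (by simpa using ht))
  · exact sym_ent _ idd _ (.of_forall fun t ht => hd.2 t (by simpa using ht))
  · exact sym_map _ _
  · exact sym_map _ _
  · exact sym_map _ _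
  · exact sym_map _ _
  · rw [sym_zero_mul ig ic, sym_add _ _ ia (ig.conv ic)]
    refine sym_ent _ (ia.add (ig.conv ic)) _ ?_
    filter_upwards [h1] with t ht hts
    exact ht (by simpa using hts)
  · rw [hgs, sym_one_eq, Matrix.mul_add, Matrix.mul_one, sym_zero_mul ig.adjF ia,
      sym_add _ _ ig.adjF (ig.adjF.conv ia), sym_add _ _ (ig.adjF.add (ig.adjF.conv ia)) ic]
    refine sym_ent _ ((ig.adjF.add (ig.adjF.conv ia)).add ic) _ ?_
    filter_upwards [h2] with t ht hts
    exact ht (by simpa using hts)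
  · rw [hgs, sym_zero_mul ig.adjF ib, sym_add _ _ idd (ig.adjF.conv ib)]
    refine sym_ent _ (idd.add (ig.adjF.conv ib)) _ ?_
    filter_upwards [h3] with t ht hts
    exact ht (by simpa using hts)
  · rw [sym_one_eq, Matrix.mul_add, Matrix.mul_one, sym_zero_mul ig idd,
      sym_add _ _ ig (ig.conv idd), sym_add _ _ (ig.add (ig.conv idd)) ib]
    refine sym_ent _ ((ig.add (ig.conv idd)).add ib) _ ?_
    filter_upwards [h4] with t ht hts
    exact ht (by simpa using hts)

theorem intM_zero {k m : ℕ} : IntM (0 : MatF k m) := fun _ _ => integrable_zero _ _ _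

theorem sym_zero_zero {k m : ℕ} : sym (0 : Matrix (Fin k) (Fin m) ℂ) 0 = 0 := by
  ext1 i j
  have : cls (fun _ => (0 : ℂ)) = 0 := cls_zero
  simp [sym, this]

theorem sym_one_star {k : ℕ} {r : MatF k k} (hr : IntM r) : (sym 1 r)ᴴ = sym 1 (adjF r) := by
  rw [sym_star _ hr, conjTranspose_one]

theorem sym_zero_star {k m : ℕ} {r : MatF k m} (hr : IntM r) : (sym 0 r)ᴴ = sym 0 (adjF r) := by
  rw [sym_star _ hr, conjTranspose_zero]

/-- The diagonal identities of condition (L1), read off from the Wiener algebra. -/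
theorem ae_of_unitary {k m : ℕ} {r : MatF k k} {h : MatF m k} (hr : IntM r) (hh : IntM h)
    (e : (sym 1 r)ᴴ * sym 1 r - (sym 0 h)ᴴ * sym 0 h = 1) :
    ∀ᵐ t : ℝ, adjF r t + r t + conv (adjF r) r t - conv (adjF h) h t = 0 := by
  change ∀ᵐ t : ℝ, (adjF r + r + conv (adjF r) r - conv (adjF h) h) t = (0 : MatF k k) t
  have i1 := hr.adjF.add hr
  have i2 := i1.add (hr.adjF.conv hr)
  have i3 := hh.adjF.conv hh
  refine sym_inj (r₀ := 0) (i2.sub i3) intM_zero ?_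
  have e1 : sym 0 (adjF r) + sym 0 r + sym 0 (conv (adjF r) r) - sym 0 (conv (adjF h) h) = 0 := by
    rw [← sub_eq_zero] at e
    rw [← e, sym_one_star hr, sym_zero_star hh, sym_one_eq, sym_one_eq, Matrix.mul_add,
      Matrix.mul_one, Matrix.add_mul, Matrix.one_mul, sym_zero_mul hr.adjF hr,
      sym_zero_mul hh.adjF hh]
    abel
  rw [sym_add _ _ hr.adjF hr, sym_add _ _ i1 (hr.adjF.conv hr), sym_sub _ _ i2 i3] at e1
  simpa [sym_zero_zero] using e1

theorem EGAlg.condL1 {p q : ℕ} {a : MatF p p} {b : MatF p q} {c : MatF q p} {d : MatF q q}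
    {g : Matrix (Fin p) (Fin q) WU} (ia : IntM a) (ib : IntM b) (ic : IntM c) (idd : IntM d)
    (h : EGAlg Ap Am (fstHom ℂ WA : WU →+* ℂ) (sym 1 a) (sym 0 b) (sym 0 c) (sym 1 d) g) :
    CondL1 a b c d := by
  refine ⟨ae_of_unitary ia ic h.first, ae_of_unitary idd ib h.second, ?_⟩
  have h3 := h.third
  rw [sym_one_star ia, sym_zero_star ic, sym_one_eq, sym_one_eq, Matrix.mul_add, Matrix.add_mul,
    Matrix.one_mul, Matrix.mul_one, sym_zero_mul ia.adjF ib, sym_zero_mul ic.adjF idd,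
    sym_add _ _ ib (ia.adjF.conv ib), sym_add _ _ ic.adjF (ic.adjF.conv idd)] at h3
  exact sym_inj (ib.add (ia.adjF.conv ib)) (ic.adjF.add (ic.adjF.conv idd)) h3

/-! ### Necessity in the inverse problem -/

/-- Theorem 1.2, necessity part. -/
theorem stmt3 {p q : ℕ}
    (a : MatF p p) (b : MatF p q) (c : MatF q p) (d : MatF q q)
    (ha : L1Plus a) (hb : L1Plus b) (hc : L1Minus c) (hd : L1Minus d)
    (Tpα : L1P p →L[ℂ] L1P p) (hTpα : IsTP 1 a Tpα)
    (Tpαs : L1P p →L[ℂ] L1P p) (hTpαs : IsTP 1 (adjF a) Tpαs)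
    (Tpβ : L1P q →L[ℂ] L1P p) (hTpβ : IsTP 0 b Tpβ)
    (Tpβs : L1P p →L[ℂ] L1P q) (hTpβs : IsTP 0 (adjF b) Tpβs)
    (Tmδ : L1M q →L[ℂ] L1M q) (hTmδ : IsTM 1 d Tmδ)
    (Tmδs : L1M q →L[ℂ] L1M q) (hTmδs : IsTM 1 (adjF d) Tmδs)
    (Tmγ : L1M p →L[ℂ] L1M q) (hTmγ : IsTM 0 c Tmγ)
    (Tmγs : L1M q →L[ℂ] L1M p) (hTmγs : IsTM 0 (adjF c) Tmγs)
    (hex : ∃ g : MatF p q, L1Plus g ∧ EGSol a b c d g) :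
    CondL1 a b c d ∧
    Function.Injective (Tpα.comp Tpαs - Tpβ.comp Tpβs) ∧
    Function.Injective (Tmδ.comp Tmδs - Tmγ.comp Tmγs) ∧
    InvertibleCLM (Tpα.comp Tpαs - Tpβ.comp Tpβs) ∧
    InvertibleCLM (Tmδ.comp Tmδs - Tmγ.comp Tmγs) := by
  obtain ⟨g, hg, hsol⟩ := hex
  have h := EGSol.toAlg ha hb hc hd hg hsol
  have ia : IntM a := ha.1
  have ib : IntM b := hb.1
  have ic : IntM c := hc.1
  have idd : IntM d := hd.1
  obtain ⟨⟨e1, e2⟩, e3, e4⟩ := h.transposed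
  have B1 : Function.Bijective (Tpα.comp Tpαs - Tpβ.comp Tpβs) := by
    refine bijective_of_op measurableSet_Ici rfl projP_inr projQ_inr
      (fun f => emb_T measurableSet_Ici rfl projP_inr ia (hTpα f))
      (fun f => emb_T measurableSet_Ici rfl projP_inr ia.adjF (hTpαs f))
      (fun f => emb_T measurableSet_Ici rfl projP_inr ib (hTpβ f))
      (fun f => emb_T measurableSet_Ici rfl projP_inr ib.adjF (hTpβs f))
      (g := sym 0 g) (gs := (sym 0 g)ᴴ) ?_ ?_
    · rw [← sym_one_star ia, ← sym_zero_star ib]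
      exact opM_opN projPair (h.hα.star h.starp) (h.hβ.star h.starp) (h.hγ.star h.starm)
        (h.hδ.star h.starm) h.us h.vs h.ws h.zs e1 e3
    · rw [← sym_one_star ia, ← sym_zero_star ib]
      exact opN_opM projPair h.hα h.hβ h.hγ h.hδ h.w h.u h.v h.z e1 e4
  -- the second operator is the first one with the two half-lines interchanged
  have B2 : Function.Bijective (Tmδ.comp Tmδs - Tmγ.comp Tmγs) := by
    refine bijective_of_op measurableSet_Iic rfl projQ_inr projP_inr
      (fun f => emb_T measurableSet_Iic rfl projQ_inr idd (hTmδ f))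
      (fun f => emb_T measurableSet_Iic rfl projQ_inr idd.adjF (hTmδs f))
      (fun f => emb_T measurableSet_Iic rfl projQ_inr ic (hTmγ f))
      (fun f => emb_T measurableSet_Iic rfl projQ_inr ic.adjF (hTmγs f))
      (g := (sym 0 g)ᴴ) (gs := sym 0 g) ?_ ?_
    · rw [← sym_one_star idd, ← sym_zero_star ic]
      exact opM_opN projPair.symm (h.hδ.star h.starm) (h.hγ.star h.starm) (h.hβ.star h.starp)
        (h.hα.star h.starp) h.zs h.ws h.vs h.us e2 e4.symm
    · rw [← sym_one_star idd, ← sym_zero_star ic]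
      exact opN_opM projPair.symm h.hδ h.hγ h.hβ h.hα h.v h.z h.w h.u e2 e3.symm
  exact ⟨h.condL1 ia ib ic idd, B1.1, B2.1, invertible_of_bijective B1,
    invertible_of_bijective B2⟩
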